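/- arXiv:2109.09239 — 2 statements merged into one kernel-verified Lean document; each statement's English description precedes it below -/
import Mathlib

section
/- Assume Condition (A1). For every A₀ > 0 there exist constants K₀, M₀, α₀ > 0, depending only on A₀ and the constants C_ξ, H_ξ, α_ξ of (A1), such that for every θ ∈ ℝⁿ and every M ≥ 0: ℙ_θ( ℓ(|Ĩ(K₀)|) ≥ M₀·ℓ(|I_*(A₀,θ)|) + M ) ≤ H₀·e^{−α₀·M}. -/
open MeasureTheory Finset
open scoped Classical

/-- `ell n k = k * log(q*n/k)` with `q = e^2`; equals `0` at `k = 0` by Lean's conventions. -/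
noncomputable def ell (n k : ℕ) : ℝ := (k : ℝ) * Real.log (Real.exp 2 * n / k)

/-! Write `ρ J` for the penalty of `J`. If the preselected set `J` is much more expensive than
the oracle set `S`, then `J` carries a lot of noise: since `ρ` is subadditive under unions,
optimality of `S` against `S ∪ J` bounds the signal on `J \ S` by a multiple of `ρ J`, while
optimality of `J` against `S` makes the data on `J \ S` large, so the noise energy on `J`
exceeds a multiple of `ρ J`. For a fixed `J` the tail condition makes this exponentially
unlikely in `ρ J`, and the union bound over all `J` converges because
`n.choose k ≤ exp (ell n k - k)`. -/

section Ell

variable {n k l m : ℕ}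

theorem two_le_log_exp_two_mul_div (hk : 0 < k) (hkn : k ≤ n) :
    2 ≤ Real.log (Real.exp 2 * n / k) := by
  have hk₀ : (0 : ℝ) < k := by exact_mod_cast hk
  have hn₀ : (0 : ℝ) < n := by exact_mod_cast hk.trans_le hkn
  rw [Real.le_log_iff_exp_le (by positivity), le_div_iff₀ hk₀]
  gcongr

theorem two_mul_le_ell (hkn : k ≤ n) : 2 * (k : ℝ) ≤ ell n k := by
  rcases Nat.eq_zero_or_pos k with rfl | hk
  · simp [ell]
  · rw [ell, mul_comm]
    gcongr
    exact two_le_log_exp_two_mul_div hk hkn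

theorem ell_nonneg (hkn : k ≤ n) : 0 ≤ ell n k :=
  le_trans (by positivity) (two_mul_le_ell hkn)

theorem mul_log_le_ell (hkm : k ≤ m) (hmn : m ≤ n) :
    (k : ℝ) * Real.log (Real.exp 2 * n / m) ≤ ell n k := by
  rcases Nat.eq_zero_or_pos k with rfl | hk
  · simp [ell]
  · have hm₀ : (0 : ℝ) < m := by exact_mod_cast hk.trans_le hkm
    have hn₀ : (0 : ℝ) < n := by exact_mod_cast (hk.trans_le hkm).trans_le hmn
    unfold ell
    gcongr

theorem ell_le_ell_add_ell (hkm : k ≤ m) (hlm : l ≤ m) (hmkl : m ≤ k + l) (hmn : m ≤ n) :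
    ell n m ≤ ell n k + ell n l := by
  rcases Nat.eq_zero_or_pos m with rfl | hm
  · simpa [ell] using add_nonneg (ell_nonneg (hkm.trans hmn)) (ell_nonneg (hlm.trans hmn))
  · have hlog : 0 ≤ Real.log (Real.exp 2 * n / m) :=
      zero_le_two.trans (two_le_log_exp_two_mul_div hm hmn)
    calc ell n m ≤ (k + l : ℝ) * Real.log (Real.exp 2 * n / m) := by
          unfold ell
          gcongr
          exact_mod_cast hmkl
      _ = k * Real.log (Real.exp 2 * n / m) + l * Real.log (Real.exp 2 * n / m) := add_mul ..
      _ ≤ ell n k + ell n l := add_le_add (mul_log_le_ell hkm hmn) (mul_log_le_ell hlm hmn)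

theorem exp_ell_sub_eq_pow (hk : 0 < k) (hn : 0 < n) :
    Real.exp (ell n k - k) = (Real.exp 1 * n / k) ^ k := by
  have hell : ell n k - k = k * (Real.log (Real.exp 2 * n / k) - 1) := by
    rw [ell]
    ring
  have hexp : Real.exp 2 = Real.exp 1 * Real.exp 1 := by
    rw [← Real.exp_add, one_add_one_eq_two]
  rw [hell, Real.exp_nat_mul, Real.exp_sub, Real.exp_log (by positivity), hexp]
  field_simp

theorem choose_le_exp_ell_sub (n k : ℕ) : (n.choose k : ℝ) ≤ Real.exp (ell n k - k) := by
  rcases Nat.eq_zero_or_pos k with rfl | hk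
  · simp [ell]
  rcases Nat.eq_zero_or_pos n with rfl | hn
  · rw [Nat.choose_eq_zero_of_lt hk, Nat.cast_zero]
    positivity
  have hk₀ : (0 : ℝ) < k := by exact_mod_cast hk
  calc (n.choose k : ℝ) ≤ (n : ℝ) ^ k / k.factorial := Nat.choose_le_pow_div k n
    _ = (n / k : ℝ) ^ k * ((k : ℝ) ^ k / k.factorial) := by
      rw [div_pow]
      field_simp
    _ ≤ (n / k : ℝ) ^ k * Real.exp k := by
      gcongr
      exact Real.pow_div_factorial_le_exp _ hk₀.le k
    _ = (Real.exp 1 * n / k) ^ k := by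
      rw [← Real.exp_one_pow, ← mul_pow]
      ring
    _ = Real.exp (ell n k - k) := (exp_ell_sub_eq_pow hk hn).symm

theorem sum_exp_neg_ell_card_le (ι : Type*) [Fintype ι] :
    ∑ J : Finset ι, Real.exp (-ell (Fintype.card ι) J.card) ≤ (1 - Real.exp (-1))⁻¹ := by
  set n := Fintype.card ι
  have hlt : Real.exp (-1) < 1 := by simp
  have hterm (k : ℕ) : (n.choose k : ℝ) * Real.exp (-ell n k) ≤ Real.exp (-1) ^ k := by
    calc (n.choose k : ℝ) * Real.exp (-ell n k)
        ≤ Real.exp (ell n k - k) * Real.exp (-ell n k) := by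
          gcongr
          exact choose_le_exp_ell_sub n k
      _ = Real.exp (-1) ^ k := by
          rw [← Real.exp_add, ← Real.exp_nat_mul]
          ring_nf
  calc ∑ J : Finset ι, Real.exp (-ell n J.card)
      = ∑ k ∈ range (n + 1), (n.choose k : ℝ) * Real.exp (-ell n k) := by
        rw [← powerset_univ, sum_powerset_apply_card (fun k => Real.exp (-ell n k))]
        simp only [nsmul_eq_mul, card_univ, n]
    _ ≤ ∑ k ∈ range (n + 1), Real.exp (-1) ^ k := sum_le_sum fun k _ => hterm k
    _ ≤ ∑' k : ℕ, Real.exp (-1) ^ k :=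
        (summable_geometric_of_lt_one (Real.exp_pos _).le hlt).sum_le_tsum _
          fun _ _ => by positivity
    _ = (1 - Real.exp (-1))⁻¹ := tsum_geometric_of_lt_one (Real.exp_pos _).le hlt

end Ell

section Penalty

variable {ι : Type*} [Fintype ι] [DecidableEq ι]

/-- A complexity penalty on the subsets of `ι`: it dominates the cardinality, is subadditive under
unions, and its Gibbs weights `exp (-ρ J)` have total mass at most `B`. These are the only
properties of `J ↦ ell n |J|` that matter for preselection. -/
structure IsComplexityPenalty (ρ : Finset ι → ℝ) (B : ℝ) : Prop where
  card_le : ∀ J, (J.card : ℝ) ≤ ρ J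
  union_le : ∀ S J, ρ (S ∪ J) ≤ ρ S + ρ J
  sum_exp_neg_le : ∑ J, Real.exp (-ρ J) ≤ B

theorem isComplexityPenalty_ell_card :
    IsComplexityPenalty (fun J : Finset ι => ell (Fintype.card ι) J.card)
      (1 - Real.exp (-1))⁻¹ where
  card_le J := by
    have := two_mul_le_ell (card_le_univ J)
    linarith [Nat.cast_nonneg (α := ℝ) J.card]
  union_le S J := ell_le_ell_add_ell (card_le_card subset_union_left)
    (card_le_card subset_union_right) (card_union_le S J) (card_le_univ _)
  sum_exp_neg_le := sum_exp_neg_ell_card_le ι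

/-- `I` minimizes the residual energy of `y` off `I` plus `c` times the penalty `ρ I`. With
`ρ I = ell n |I|`, the preselector is the case `c = K * σ ^ 2`, `y = X`, and the active set is the
case `c = A * σ ^ 2`, `y = θ`. -/
def IsPenalizedMinimizer (c : ℝ) (ρ : Finset ι → ℝ) (y : ι → ℝ) (I : Finset ι) : Prop :=
  ∀ I' : Finset ι, (∑ i ∈ Iᶜ, y i ^ 2) + c * ρ I ≤ (∑ i ∈ I'ᶜ, y i ^ 2) + c * ρ I'

theorem sum_sdiff_add_sum_compl_union {M : Type*} [AddCommMonoid M] (S J : Finset ι) (f : ι → M) :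
    ∑ i ∈ J \ S, f i + ∑ i ∈ (S ∪ J)ᶜ, f i = ∑ i ∈ Sᶜ, f i := by
  have hsdiff : J \ S = Sᶜ \ (S ∪ J)ᶜ := by
    ext i
    simp only [mem_sdiff, mem_compl, mem_union]
    tauto
  rw [hsdiff, sum_sdiff (compl_subset_compl.mpr subset_union_left)]

namespace IsPenalizedMinimizer

variable {ρ : Finset ι → ℝ} {x θ : ι → ℝ} {J S : Finset ι} {K A σ : ℝ}

theorem mul_sub_le_sum_sq_sdiff (hJ : IsPenalizedMinimizer K ρ x J) (S : Finset ι) :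
    K * (ρ J - ρ S) ≤ ∑ i ∈ J \ S, x i ^ 2 := by
  have hmono : ∑ i ∈ (S ∪ J)ᶜ, x i ^ 2 ≤ ∑ i ∈ Jᶜ, x i ^ 2 :=
    sum_le_sum_of_subset_of_nonneg (compl_subset_compl.mpr subset_union_right)
      fun _ _ _ => sq_nonneg _
  linarith [hJ S, sum_sdiff_add_sum_compl_union S J fun i => x i ^ 2]

theorem sum_sq_sdiff_le (hS : IsPenalizedMinimizer A ρ θ S) (hA : 0 ≤ A)
    (hunion : ρ (S ∪ J) ≤ ρ S + ρ J) :
    ∑ i ∈ J \ S, θ i ^ 2 ≤ A * ρ J := by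
  have hpen := mul_le_mul_of_nonneg_left hunion hA
  linarith [hS (S ∪ J), sum_sdiff_add_sum_compl_union S J fun i => θ i ^ 2]

theorem sub_mul_le_add_sum_sq_sub (hJ : IsPenalizedMinimizer K ρ x J)
    (hS : IsPenalizedMinimizer A ρ θ S) (hA : 0 ≤ A) (hunion : ρ (S ∪ J) ≤ ρ S + ρ J) :
    (K - 2 * A) * ρ J ≤ K * ρ S + 2 * ∑ i ∈ J, (x i - θ i) ^ 2 := by
  have hsplit : ∑ i ∈ J \ S, x i ^ 2
      ≤ 2 * ∑ i ∈ J \ S, θ i ^ 2 + 2 * ∑ i ∈ J \ S, (x i - θ i) ^ 2 := by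
    rw [← mul_add, ← sum_add_distrib, mul_sum]
    refine sum_le_sum fun i _ => ?_
    simpa only [add_sub_cancel] using add_sq_le (a := θ i) (b := x i - θ i)
  have hnoise : ∑ i ∈ J \ S, (x i - θ i) ^ 2 ≤ ∑ i ∈ J, (x i - θ i) ^ 2 :=
    sum_le_sum_of_subset_of_nonneg sdiff_subset fun _ _ _ => sq_nonneg _
  linarith [hJ.mul_sub_le_sum_sq_sdiff S, hS.sum_sq_sdiff_le hA hunion]

theorem mul_le_sum_sq_noise (hJ : IsPenalizedMinimizer (K * σ ^ 2) ρ x J)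
    (hS : IsPenalizedMinimizer (A * σ ^ 2) ρ θ S) (hσ : σ ≠ 0) (hK : 0 ≤ K) (hA : 0 ≤ A)
    (hunion : ρ (S ∪ J) ≤ ρ S + ρ J) (hSJ : 2 * ρ S ≤ ρ J) :
    (K / 4 - A) * ρ J ≤ ∑ i ∈ J, ((x i - θ i) / σ) ^ 2 := by
  have hσ₂ : 0 < σ ^ 2 := by positivity
  have hpen : K * σ ^ 2 * (2 * ρ S) ≤ K * σ ^ 2 * ρ J := by gcongr
  simp only [div_pow]
  rw [← sum_div, le_div_iff₀ hσ₂]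
  linarith [hJ.sub_mul_le_add_sum_sq_sub hS (by positivity) hunion]

end IsPenalizedMinimizer

end Penalty

section Tail

variable {Ω ι : Type*} [MeasurableSpace Ω] {μ : Measure Ω} {ξ : Ω → ι → ℝ} {C H α β M : ℝ}

/-- Condition (A1) for a single law `μ`: on every index set `I`, the energy of the noise `ξ`
exceeds `C * |I|` with at most exponential tails. -/
def HasExponentialEnergyTail (μ : Measure Ω) (ξ : Ω → ι → ℝ) (C H α : ℝ) : Prop :=
  ∀ (I : Finset ι) (M : ℝ), 0 ≤ M →
    μ {ω | C * I.card + M ≤ ∑ i ∈ I, ξ ω i ^ 2} ≤ ENNReal.ofReal (H * Real.exp (-α * M))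

namespace HasExponentialEnergyTail

theorem measure_le_exp_mul_exp (hξ : HasExponentialEnergyTail μ ξ C H α) (hH : 0 ≤ H) (hα : 0 < α)
    (hβ : 0 ≤ β) (J : Finset ι) {r : ℝ} (hr : 0 ≤ r) (hMr : M ≤ r) :
    μ {ω | C * J.card + (1 + β) / α * r ≤ ∑ i ∈ J, ξ ω i ^ 2}
      ≤ ENNReal.ofReal (H * Real.exp (-β * M) * Real.exp (-r)) := by
  refine (hξ J _ (by positivity)).trans (ENNReal.ofReal_le_ofReal ?_)
  have hexponent : -α * ((1 + β) / α * r) = -β * r + -r := by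
    field_simp
    ring
  rw [hexponent, Real.exp_add, ← mul_assoc]
  gcongr H * Real.exp ?_ * _
  exact mul_le_mul_of_nonpos_left hMr (neg_nonpos.mpr hβ)

theorem measure_exists_le [Fintype ι] (hξ : HasExponentialEnergyTail μ ξ C H α) (hH : 0 ≤ H)
    (hα : 0 < α) (hβ : 0 ≤ β) {ρ : Finset ι → ℝ} {B : ℝ} (hρ : ∀ J, 0 ≤ ρ J)
    (hB : ∑ J, Real.exp (-ρ J) ≤ B) :
    μ {ω | ∃ J, M ≤ ρ J ∧ C * J.card + (1 + β) / α * ρ J ≤ ∑ i ∈ J, ξ ω i ^ 2}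
      ≤ ENNReal.ofReal (H * B * Real.exp (-β * M)) := by
  let noisy (J : Finset ι) : Set Ω := {ω | C * J.card + (1 + β) / α * ρ J ≤ ∑ i ∈ J, ξ ω i ^ 2}
  let large : Finset (Finset ι) := {J | M ≤ ρ J}
  have hcover : {ω | ∃ J, M ≤ ρ J ∧ C * J.card + (1 + β) / α * ρ J ≤ ∑ i ∈ J, ξ ω i ^ 2}
      ⊆ ⋃ J ∈ large, noisy J := by
    rintro ω ⟨J, hMJ, hnoise⟩
    exact Set.mem_biUnion (by simpa [large] using hMJ) hnoise
  have hsum : ∑ J ∈ large, Real.exp (-ρ J) ≤ B :=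
    (sum_le_sum_of_subset_of_nonneg (subset_univ _) fun _ _ _ => (Real.exp_pos _).le).trans hB
  calc _ ≤ ∑ J ∈ large, μ (noisy J) := (measure_mono hcover).trans (measure_biUnion_finset_le _ _)
    _ ≤ ∑ J ∈ large, ENNReal.ofReal (H * Real.exp (-β * M) * Real.exp (-ρ J)) :=
        sum_le_sum fun J hJ =>
          hξ.measure_le_exp_mul_exp hH hα hβ J (hρ J) (mem_filter.mp hJ).2
    _ = ENNReal.ofReal (H * Real.exp (-β * M) * ∑ J ∈ large, Real.exp (-ρ J)) := by
        rw [mul_sum, ENNReal.ofReal_sum_of_nonneg fun _ _ => by positivity]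
    _ ≤ ENNReal.ofReal (H * B * Real.exp (-β * M)) := by
        rw [mul_right_comm H B]
        gcongr

end HasExponentialEnergyTail

end Tail

theorem stmt_0_general {Ω ι : Type*} [MeasurableSpace Ω] [Fintype ι] [DecidableEq ι]
    {μ : Measure Ω} {X : Ω → ι → ℝ} {θ : ι → ℝ} {σ C H α A β K B M : ℝ} {ρ : Finset ι → ℝ}
    (hσ : σ ≠ 0) (hC : 0 ≤ C) (hH : 0 ≤ H) (hα : 0 < α) (hA : 0 ≤ A) (hβ : 0 ≤ β)
    (hρ : IsComplexityPenalty ρ B)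
    (hξ : HasExponentialEnergyTail μ (fun ω i => (X ω i - θ i) / σ) C H α)
    (hK : 4 * (A + C + (1 + β) / α) ≤ K)
    {Itil : Ω → Finset ι} (hItil : ∀ ω, IsPenalizedMinimizer (K * σ ^ 2) ρ (X ω) (Itil ω))
    {Istar : Finset ι} (hIstar : IsPenalizedMinimizer (A * σ ^ 2) ρ θ Istar) (hM : 0 ≤ M) :
    μ {ω | 2 * ρ Istar + M ≤ ρ (Itil ω)} ≤ ENNReal.ofReal (H * B * Real.exp (-β * M)) := by
  have hnonneg (J : Finset ι) : 0 ≤ ρ J := (Nat.cast_nonneg _).trans (hρ.card_le J)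
  have hK₀ : 0 ≤ K := le_trans (by positivity) hK
  refine (measure_mono fun ω (hω : 2 * ρ Istar + M ≤ ρ (Itil ω)) => ?_).trans
    (hξ.measure_exists_le hH hα hβ hnonneg hρ.sum_exp_neg_le)
  refine ⟨Itil ω, by linarith [hnonneg Istar], ?_⟩
  calc C * (Itil ω).card + (1 + β) / α * ρ (Itil ω)
      ≤ C * ρ (Itil ω) + (1 + β) / α * ρ (Itil ω) := by
        gcongr
        exact hρ.card_le _
    _ = (C + (1 + β) / α) * ρ (Itil ω) := (add_mul ..).symm
    _ ≤ (K / 4 - A) * ρ (Itil ω) := by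
        refine mul_le_mul_of_nonneg_right ?_ (hnonneg _)
        linarith
    _ ≤ ∑ i ∈ Itil ω, ((X ω i - θ i) / σ) ^ 2 :=
        (hItil ω).mul_le_sum_sq_noise hIstar hσ hK₀ hA (hρ.union_le _ _) (by linarith)

theorem stmt_0 (Cξ Hξ αξ : ℝ) (hCξ : 0 < Cξ) (hHξ : 0 < Hξ) (hαξ : 0 < αξ) (A₀ : ℝ) (hA₀ : 0 < A₀) :
    ∃ K₀ M₀ α₀ : ℝ, 0 < K₀ ∧ 0 < M₀ ∧ 0 < α₀ ∧
      ∀ (n : ℕ) (σ : ℝ), 0 < σ →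
        ∀ P : (Fin n → ℝ) → Measure (Fin n → ℝ),
          (∀ θ, IsProbabilityMeasure (P θ)) →
          (∀ (θ : Fin n → ℝ) (I : Finset (Fin n)) (M : ℝ), 0 ≤ M →
            P θ {x | Cξ * I.card + M ≤ ∑ i ∈ I, ((x i - θ i) / σ) ^ 2}
              ≤ ENNReal.ofReal (Hξ * Real.exp (-αξ * M))) →
          ∀ Itil : (Fin n → ℝ) → Finset (Fin n),
            (∀ (x : Fin n → ℝ) (I : Finset (Fin n)),
              (∑ i ∈ (Itil x)ᶜ, x i ^ 2) + K₀ * σ ^ 2 * ell n (Itil x).card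
                ≤ (∑ i ∈ Iᶜ, x i ^ 2) + K₀ * σ ^ 2 * ell n I.card) →
            ∀ (θ : Fin n → ℝ) (Istar : Finset (Fin n)),
              (∀ I : Finset (Fin n),
                (∑ i ∈ Istarᶜ, θ i ^ 2) + A₀ * σ ^ 2 * ell n Istar.card
                  ≤ (∑ i ∈ Iᶜ, θ i ^ 2) + A₀ * σ ^ 2 * ell n I.card) →
              ∀ M : ℝ, 0 ≤ M →
                P θ {x | M₀ * ell n Istar.card + M ≤ ell n (Itil x).card}
                  ≤ ENNReal.ofReal (Hξ / (1 - Real.exp (-1)) * Real.exp (-α₀ * M)) := by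
  refine ⟨4 * (A₀ + Cξ + (1 + 1) / αξ), 2, 1, by positivity, two_pos, one_pos, ?_⟩
  intro n σ hσ P _ hP Itil hItil θ Istar hIstar M hM
  have hρ : IsComplexityPenalty (fun J : Finset (Fin n) => ell n J.card) (1 - Real.exp (-1))⁻¹ := by
    simpa only [Fintype.card_fin] using isComplexityPenalty_ell_card (ι := Fin n)
  exact stmt_0_general hσ.ne' hCξ.le hHξ.le hαξ hA₀.le zero_le_one hρ (hP θ) le_rfl hItil hIstar hM
end

section
/- Assume Condition (A1) and the standing assumptions. Then there exist constants H₃, α₄ > 0, depending only on the constants of (A1) and of the standing assumptions, such that for every θ ∈ Θ(K) the Hamming risk of the selector satisfies E_θ[ |Î(K)∖I_*| + |I_*∖Î(K)| ] ≤ H₃·n·(n/(|I_*| ∨ 1))^{−α₄}. -/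
open MeasureTheory Finset
open scoped Classical

/-- The selector `Î(K)`: empty if the preselector `Ĩ(K)` is empty, otherwise all coordinates
with `X_i² ≥ K σ² log(q n / |Ĩ(K)|)`, where `q = e²`. -/
noncomputable def ihat {n : ℕ} (K σ : ℝ) (Itil : (Fin n → ℝ) → Finset (Fin n))
    (x : Fin n → ℝ) : Finset (Fin n) :=
  if Itil x = ∅ then ∅
  else Finset.univ.filter fun i =>
    K * σ ^ 2 * Real.log (Real.exp 2 * (n : ℝ) / (Itil x).card) ≤ (x i) ^ 2

/-!
Let `S` be the active set and `L = log (n / (|S| ∨ 1))`. Adding a coordinate to `S` or removing one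
from it does not decrease the penalized criterion, so `θ i ^ 2 ≤ A₀ σ² (L + 2)` off `S` and
`θ i ^ 2 ≥ A₁ σ² (L + 1)` on `S`. The selection threshold depends on the preselected set only
through the logarithm of its size: if that size lies between `δ |S|` and
`M₁ |S| + (|S| ∨ 1) exp (ε L)`, the threshold is at most `K σ² (L + O(1))` for `S` nonempty and at
least `K σ² ((1 - ε) L - O(1))`. Since `A₀ < K (1 - ε)` and `K < A₁`, misclassifying a coordinate
then forces its squared standardized noise above `κ L - O(1)` for some `κ > 0`. By the tail
hypotheses both this and a preselected set of the wrong size have probability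
`O(exp (-β L)) = O((n / (|S| ∨ 1)) ^ (-β))`, and the Hamming risk is at most the sum of the `n`
misclassification probabilities.
-/

/-- The log-sparsity `log (n / (s ∨ 1))` of a set of `s` coordinates out of `n`, the exponential
scale on which all error probabilities are measured. The truncation at `1` covers `s = 0`. -/
noncomputable def logSparsity (n s : ℕ) : ℝ := Real.log (n / (max s 1 : ℕ))

/-- `S` is an active set of `θ`: it minimizes the squared energy left outside plus the penalty
`τ * ell n |S|`. The paper's `I_*(A, θ)` is such a set for `τ = A σ²`; ties are not resolved. -/
def IsActiveSet {n : ℕ} (τ : ℝ) (θ : Fin n → ℝ) (S : Finset (Fin n)) : Prop :=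
  ∀ I : Finset (Fin n),
    (∑ i ∈ Sᶜ, θ i ^ 2) + τ * ell n S.card ≤ (∑ i ∈ Iᶜ, θ i ^ 2) + τ * ell n I.card

/-- The upper tail of `f` beyond the level `C` decays exponentially: Condition (A1) for `|I| = 1`,
with `f` a squared standardized noise coordinate. -/
def HasExpTail {Ω : Type*} [MeasurableSpace Ω] (μ : Measure Ω) (f : Ω → ℝ) (C H α : ℝ) : Prop :=
  ∀ M : ℝ, 0 ≤ M → μ {ω | C + M ≤ f ω} ≤ ENNReal.ofReal (H * Real.exp (-α * M))

section Penalty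

variable {n : ℕ}

lemma log_exp_two_mul_div_anti (hn : 0 < n) {x y : ℝ} (hx : 0 < x) (hxy : x ≤ y) :
    Real.log (Real.exp 2 * n / y) ≤ Real.log (Real.exp 2 * n / x) := by
  have hy : 0 < y := hx.trans_le hxy
  exact Real.log_le_log (by positivity) (by gcongr)

lemma log_exp_two_mul_div_mul_max (hn : 0 < n) {c : ℝ} (hc : 0 < c) (s : ℕ) :
    Real.log (Real.exp 2 * n / (c * (max s 1 : ℕ))) = 2 + logSparsity n s - Real.log c := by
  have hs : ((max s 1 : ℕ) : ℝ) ≠ 0 := by positivity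
  have hn' : (n : ℝ) ≠ 0 := by positivity
  rw [logSparsity, Real.log_div (by positivity) (by positivity), Real.log_mul (by positivity) hn',
    Real.log_exp, Real.log_mul hc.ne' hs, Real.log_div hn' hs]
  ring

lemma log_exp_two_mul_div_of_pos (hn : 0 < n) {s : ℕ} (hs : 0 < s) :
    Real.log (Real.exp 2 * n / s) = 2 + logSparsity n s := by
  simpa [max_eq_left (Nat.succ_le_of_lt hs)] using log_exp_two_mul_div_mul_max hn one_pos s

lemma logSparsity_nonneg (hn : 0 < n) {s : ℕ} (hs : s ≤ n) : 0 ≤ logSparsity n s := by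
  refine Real.log_nonneg ((one_le_div (by positivity)).mpr ?_)
  exact_mod_cast max_le hs hn

lemma logSparsity_le_ell {s : ℕ} (hs : 0 < s) (hsn : s ≤ n) : logSparsity n s ≤ ell n s := by
  have hn : 0 < n := hs.trans_le hsn
  have hL := logSparsity_nonneg hn hsn
  have hs1 : (1 : ℝ) ≤ s := by exact_mod_cast hs
  rw [ell, log_exp_two_mul_div_of_pos hn hs]
  nlinarith

lemma ell_nonneg_s6 {s : ℕ} (hsn : s ≤ n) : 0 ≤ ell n s := by
  rcases Nat.eq_zero_or_pos s with rfl | hs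
  · simp [ell]
  · exact (logSparsity_nonneg (hs.trans_le hsn) hsn).trans (logSparsity_le_ell hs hsn)

lemma ell_succ_sub_le (hn : 0 < n) (s : ℕ) :
    ell n (s + 1) - ell n s ≤ Real.log (Real.exp 2 * n / (s + 1 : ℕ)) := by
  rcases Nat.eq_zero_or_pos s with rfl | hs
  · simp [ell]
  · have hs' : (0 : ℝ) < s := by exact_mod_cast hs
    have hanti := log_exp_two_mul_div_anti hn hs' (y := (s + 1 : ℕ)) (by simp)
    have := mul_le_mul_of_nonneg_left hanti hs'.le
    simp only [ell]
    push_cast at *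
    linarith

lemma le_ell_succ_sub (hn : 0 < n) (s : ℕ) :
    Real.log (Real.exp 2 * n / (s + 1 : ℕ)) - 1 ≤ ell n (s + 1) - ell n s := by
  rcases Nat.eq_zero_or_pos s with rfl | hs
  · simp [ell]
  · have hs' : (0 : ℝ) < s := by exact_mod_cast hs
    have hlog : Real.log (Real.exp 2 * n / s) - Real.log (Real.exp 2 * n / (s + 1 : ℕ))
        ≤ 1 / s := by
      rw [← Real.log_div (by positivity) (by positivity)]
      refine (Real.log_le_sub_one_of_pos (by positivity)).trans_eq ?_
      push_cast
      field_simp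
      ring
    have := mul_le_mul_of_nonneg_left hlog hs'.le
    rw [mul_one_div_cancel hs'.ne'] at this
    simp only [ell]
    push_cast at *
    linarith

end Penalty

namespace IsActiveSet

variable {n : ℕ} {τ : ℝ} {θ : Fin n → ℝ} {S : Finset (Fin n)} {i : Fin n}

lemma sq_le_of_notMem (hS : IsActiveSet τ θ S) (hτ : 0 ≤ τ) (hi : i ∉ S) :
    θ i ^ 2 ≤ τ * (logSparsity n S.card + 2) := by
  have hinsert : θ i ^ 2 ≤ τ * (ell n (S.card + 1) - ell n S.card) := by
    have hmin := hS (insert i S)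
    have hsum : ∑ j ∈ Sᶜ, θ j ^ 2 = θ i ^ 2 + ∑ j ∈ (insert i S)ᶜ, θ j ^ 2 := by
      rw [compl_insert, Finset.add_sum_erase _ (fun j => θ j ^ 2) (by simpa using hi)]
    rw [hsum, card_insert_of_notMem hi] at hmin
    linarith
  have hrate : Real.log (Real.exp 2 * n / (S.card + 1 : ℕ)) ≤ logSparsity n S.card + 2 := by
    have hmax : (1 : ℝ) * (max S.card 1 : ℕ) ≤ (S.card + 1 : ℕ) := by
      rw [one_mul]
      exact_mod_cast (by omega : max S.card 1 ≤ S.card + 1)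
    have hanti := log_exp_two_mul_div_anti i.pos (by positivity) hmax
    rw [log_exp_two_mul_div_mul_max i.pos one_pos, Real.log_one] at hanti
    linarith
  exact hinsert.trans <|
    mul_le_mul_of_nonneg_left ((ell_succ_sub_le i.pos _).trans hrate) hτ

lemma le_sq_of_mem (hS : IsActiveSet τ θ S) (hτ : 0 ≤ τ) (hi : i ∈ S) :
    τ * (logSparsity n S.card + 1) ≤ θ i ^ 2 := by
  have herase : τ * (ell n S.card - ell n (S.erase i).card) ≤ θ i ^ 2 := by
    have hmin := hS (S.erase i)
    have hsum : ∑ j ∈ (S.erase i)ᶜ, θ j ^ 2 = θ i ^ 2 + ∑ j ∈ Sᶜ, θ j ^ 2 := by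
      rw [compl_erase, Finset.sum_insert (by simpa using hi)]
    rw [hsum] at hmin
    linarith
  have hrate := le_ell_succ_sub i.pos (S.erase i).card
  rw [card_erase_add_one hi, log_exp_two_mul_div_of_pos i.pos (card_pos.mpr ⟨i, hi⟩)] at hrate
  exact (mul_le_mul_of_nonneg_left (by linarith) hτ).trans herase

end IsActiveSet

section Selector

variable {n : ℕ} {K σ : ℝ} {Itil : (Fin n → ℝ) → Finset (Fin n)} {x : Fin n → ℝ} {i : Fin n}

lemma mem_ihat : i ∈ ihat K σ Itil x ↔ Itil x ≠ ∅ ∧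
    K * σ ^ 2 * Real.log (Real.exp 2 * n / (Itil x).card) ≤ x i ^ 2 := by
  by_cases h : Itil x = ∅ <;> simp [ihat, h]

lemma le_sq_of_mem_ihat (hK : 0 ≤ K) {c : ℝ} (hc : 0 < c) {s : ℕ} (hi : i ∈ ihat K σ Itil x)
    (hsize : ((Itil x).card : ℝ) ≤ c * (max s 1 : ℕ)) :
    K * σ ^ 2 * (2 + logSparsity n s - Real.log c) ≤ x i ^ 2 := by
  obtain ⟨hne, hxi⟩ := mem_ihat.mp hi
  have hcard : (0 : ℝ) < (Itil x).card := by
    exact_mod_cast card_pos.mpr (nonempty_iff_ne_empty.mpr hne)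
  rw [← log_exp_two_mul_div_mul_max i.pos hc]
  exact (mul_le_mul_of_nonneg_left (log_exp_two_mul_div_anti i.pos hcard hsize)
    (by positivity)).trans hxi

lemma sq_le_of_notMem_ihat (hK : 0 ≤ K) {c : ℝ} (hc : 0 < c) {s : ℕ} (hi : i ∉ ihat K σ Itil x)
    (hsize : c * (max s 1 : ℕ) ≤ ((Itil x).card : ℝ)) :
    x i ^ 2 ≤ K * σ ^ 2 * (2 + logSparsity n s - Real.log c) := by
  have hpos : 0 < c * (max s 1 : ℕ) := by positivity
  have hne : Itil x ≠ ∅ := by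
    rintro h
    rw [h, card_empty, Nat.cast_zero] at hsize
    linarith
  have hxi : x i ^ 2 < K * σ ^ 2 * Real.log (Real.exp 2 * n / (Itil x).card) :=
    not_le.mp fun h => hi (mem_ihat.mpr ⟨hne, h⟩)
  rw [← log_exp_two_mul_div_mul_max i.pos hc]
  exact hxi.le.trans (mul_le_mul_of_nonneg_left (log_exp_two_mul_div_anti i.pos hpos hsize)
    (by positivity))

end Selector

section SignalGap

lemma mul_sq_div_sub_sq_div_le_sq_sub {a c : ℝ} (ha : 0 < a) (hac : a < c) (u v : ℝ) :
    (c - a) * (u ^ 2 / c - v ^ 2 / a) ≤ (u - v) ^ 2 := by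
  have hc : 0 < c := ha.trans hac
  have hsq : (u - v) ^ 2 - (c - a) * (u ^ 2 / c - v ^ 2 / a) = (a * u - c * v) ^ 2 / (a * c) := by
    field_simp
    ring
  have : 0 ≤ (a * u - c * v) ^ 2 / (a * c) := by positivity
  linarith

lemma exists_linear_le_sq_sub_div {a b : ℝ} (ha : 0 < a) (hab : a < b) (p q : ℝ) :
    ∃ κ r : ℝ, 0 < κ ∧ ∀ {σ L u v : ℝ}, 0 < σ → v ^ 2 ≤ σ ^ 2 * (a * L + p) →
      σ ^ 2 * (b * L + q) ≤ u ^ 2 → κ * L - r ≤ ((u - v) / σ) ^ 2 := by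
  obtain ⟨c, hac, hcb⟩ := exists_between hab
  have hc : 0 < c := ha.trans hac
  have hca : 0 < c - a := sub_pos.mpr hac
  refine ⟨(c - a) * (b / c - 1), (c - a) * (p / a - q / c),
    mul_pos hca (sub_pos.mpr ((one_lt_div hc).mpr hcb)), fun {σ L u v} hσ hv hu => ?_⟩
  rw [div_pow, le_div_iff₀ (by positivity)]
  calc ((c - a) * (b / c - 1) * L - (c - a) * (p / a - q / c)) * σ ^ 2
      = (c - a) * (σ ^ 2 * (b * L + q) / c - σ ^ 2 * (a * L + p) / a) := by
        field_simp
        ring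
    _ ≤ (c - a) * (u ^ 2 / c - v ^ 2 / a) := by gcongr
    _ ≤ (u - v) ^ 2 := mul_sq_div_sub_sq_div_le_sq_sub ha hac u v

/-- A slack `exp (ε * L)` in the size of the preselected set lowers the threshold from `K * L` to
`K * (1 - ε) * L`, which still dominates the signal outside `S`. -/
lemma exists_linear_le_noise_of_mem_ihat {A K ε M : ℝ} (hA : 0 < A) (hK : 0 < K) (hε : 0 ≤ ε)
    (hAK : A < K * (1 - ε)) (hM : 0 ≤ M) :
    ∃ κ r : ℝ, 0 < κ ∧ ∀ {n : ℕ} {σ : ℝ} {θ x : Fin n → ℝ} {S : Finset (Fin n)}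
      {Itil : (Fin n → ℝ) → Finset (Fin n)} {i : Fin n}, 0 < σ → IsActiveSet (A * σ ^ 2) θ S →
      i ∉ S → i ∈ ihat K σ Itil x →
      ((Itil x).card : ℝ) ≤
        M * S.card + (max S.card 1 : ℕ) * Real.exp (ε * logSparsity n S.card) →
      κ * logSparsity n S.card - r ≤ ((x i - θ i) / σ) ^ 2 := by
  obtain ⟨κ, r, hκ, hgap⟩ :=
    exists_linear_le_sq_sub_div hA hAK (2 * A) (K * (2 - Real.log (M + 1)))
  refine ⟨κ, r, hκ, fun {n σ θ x S Itil i} hσ hS hiS hi hsize => ?_⟩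
  have hθ := hS.sq_le_of_notMem (by positivity) hiS
  set L := logSparsity n S.card
  have hsize' : ((Itil x).card : ℝ) ≤ (M + 1) * Real.exp (ε * L) * (max S.card 1 : ℕ) := by
    have hexp : 1 ≤ Real.exp (ε * L) :=
      Real.one_le_exp (mul_nonneg hε (logSparsity_nonneg i.pos (card_finset_fin_le S)))
    have hmax : (S.card : ℝ) ≤ (max S.card 1 : ℕ) := by exact_mod_cast le_max_left _ _
    calc ((Itil x).card : ℝ)
        ≤ M * S.card + (max S.card 1 : ℕ) * Real.exp (ε * L) := hsize
      _ ≤ M * ((max S.card 1 : ℕ) * Real.exp (ε * L)) +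
          (max S.card 1 : ℕ) * Real.exp (ε * L) := by
          gcongr
          exact hmax.trans (le_mul_of_one_le_right (by positivity) hexp)
      _ = (M + 1) * Real.exp (ε * L) * (max S.card 1 : ℕ) := by ring
  have hx := le_sq_of_mem_ihat hK.le (by positivity) hi hsize'
  rw [Real.log_mul (by positivity) (by positivity), Real.log_exp] at hx
  exact hgap hσ (hθ.trans_eq (by ring)) (Eq.trans_le (by ring) hx)

lemma exists_linear_le_noise_of_notMem_ihat {A K δ : ℝ} (hK : 0 < K) (hKA : K < A) (hδ : 0 < δ) :
    ∃ κ r : ℝ, 0 < κ ∧ ∀ {n : ℕ} {σ : ℝ} {θ x : Fin n → ℝ} {S : Finset (Fin n)}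
      {Itil : (Fin n → ℝ) → Finset (Fin n)} {i : Fin n}, 0 < σ → IsActiveSet (A * σ ^ 2) θ S →
      i ∈ S → i ∉ ihat K σ Itil x → δ * S.card ≤ ((Itil x).card : ℝ) →
      κ * logSparsity n S.card - r ≤ ((x i - θ i) / σ) ^ 2 := by
  obtain ⟨κ, r, hκ, hgap⟩ := exists_linear_le_sq_sub_div hK hKA (K * (2 - Real.log δ)) A
  refine ⟨κ, r, hκ, fun {n σ θ x S Itil i} hσ hS hiS hi hsize => ?_⟩
  have hA : 0 < A := hK.trans hKA
  have hmax : max S.card 1 = S.card := max_eq_left (card_pos.mpr ⟨i, hiS⟩)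
  have hθ := hS.le_sq_of_mem (by positivity) hiS
  have hx := sq_le_of_notMem_ihat hK.le hδ (s := S.card) hi (by rwa [hmax])
  rw [div_pow, sub_sq_comm, ← div_pow]
  exact hgap hσ (hx.trans_eq (by ring)) (Eq.trans_le (by ring) hθ)

end SignalGap

section Probability

variable {Ω : Type*} [MeasurableSpace Ω] {μ : Measure Ω}

lemma lintegral_card_le_sum_measure_mem {ι : Type*} [Fintype ι] (μ : Measure Ω)
    (D : Ω → Finset ι) : ∫⁻ ω, ((D ω).card : ENNReal) ∂μ ≤ ∑ i, μ {ω | i ∈ D ω} := by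
  -- The events `i ∈ D ω` may fail to be measurable, so they are replaced by measurable hulls.
  calc ∫⁻ ω, ((D ω).card : ENNReal) ∂μ
      ≤ ∫⁻ ω, ∑ i, (toMeasurable μ {ω | i ∈ D ω}).indicator 1 ω ∂μ := by
        refine lintegral_mono fun ω => ?_
        rw [card_eq_sum_ones, Nat.cast_sum]
        refine (Finset.sum_le_sum fun i hi => ?_).trans
          (Finset.sum_le_sum_of_subset (subset_univ (D ω)))
        rw [Set.indicator_of_mem (subset_toMeasurable μ _ hi), Nat.cast_one, Pi.one_apply]
    _ = ∑ i, μ {ω | i ∈ D ω} := by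
        rw [lintegral_finsetSum _ fun i _ =>
          measurable_one.indicator (measurableSet_toMeasurable _ _)]
        simp only [lintegral_indicator_one, measurableSet_toMeasurable, measure_toMeasurable]

lemma lintegral_hamming_loss_le {ι : Type*} [Fintype ι] [DecidableEq ι] {D : Ω → Finset ι}
    {S : Finset ι} {a b : ENNReal}
    (hpos : ∀ i ∉ S, μ {ω | i ∈ D ω} ≤ a) (hneg : ∀ i ∈ S, μ {ω | i ∉ D ω} ≤ b) :
    ∫⁻ ω, ENNReal.ofReal (((D ω \ S).card : ℝ) + ((S \ D ω).card : ℝ)) ∂μ ≤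
      Fintype.card ι * (a + b) := by
  have hloss : ∀ ω, ENNReal.ofReal (((D ω \ S).card : ℝ) + ((S \ D ω).card : ℝ)) =
      ((symmDiff (D ω) S).card : ENNReal) := fun ω => by
    rw [← Nat.cast_add, ENNReal.ofReal_natCast, ← card_union_of_disjoint disjoint_sdiff_sdiff]
    rfl
  have hcoord : ∀ i, μ {ω | i ∈ symmDiff (D ω) S} ≤ a + b := fun i => by
    by_cases hi : i ∈ S
    · simpa [mem_symmDiff, hi] using (hneg i hi).trans le_add_self
    · simpa [mem_symmDiff, hi] using (hpos i hi).trans le_self_add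
  simp only [hloss]
  refine (lintegral_card_le_sum_measure_mem μ _).trans
    ((Finset.sum_le_card_nsmul univ _ _ fun i _ => hcoord i).trans_eq ?_)
  rw [card_univ, nsmul_eq_mul]

lemma HasExpTail.measure_le [IsProbabilityMeasure μ] {f : Ω → ℝ} {C H α : ℝ}
    (hf : HasExpTail μ f C H α) (hα : 0 ≤ α) (t : ℝ) :
    μ {ω | t ≤ f ω} ≤ ENNReal.ofReal (max H 1 * Real.exp (α * (C - t))) := by
  rcases le_total C t with hCt | htC
  · have htail := hf (t - C) (sub_nonneg.mpr hCt)
    rw [add_sub_cancel, show -α * (t - C) = α * (C - t) by ring] at htail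
    exact htail.trans (ENNReal.ofReal_le_ofReal (by gcongr; exact le_max_left _ _))
  · refine prob_le_one.trans (ENNReal.one_le_ofReal.mpr ?_)
    exact one_le_mul_of_one_le_of_one_le (le_max_right _ _)
      (Real.one_le_exp (mul_nonneg hα (sub_nonneg.mpr htC)))

lemma ofReal_mul_exp_add_le {a b β γ L : ℝ} (ha : 0 ≤ a) (hb : 0 ≤ b) (hL : 0 ≤ L) :
    ENNReal.ofReal (a * Real.exp (-β * L)) + ENNReal.ofReal (b * Real.exp (-γ * L)) ≤
      ENNReal.ofReal ((a + b) * Real.exp (-min β γ * L)) := by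
  rw [← ENNReal.ofReal_add (by positivity) (by positivity), add_mul]
  gcongr
  · exact min_le_left β γ
  · exact min_le_right β γ

lemma measure_le_of_subset_union_tail [IsProbabilityMeasure μ] {f : Ω → ℝ}
    {C H α H₀ β κ r L : ℝ} {E B : Set Ω} (hf : HasExpTail μ f C H α) (hα : 0 ≤ α) (hH₀ : 0 ≤ H₀)
    (hL : 0 ≤ L) (hB : μ B ≤ ENNReal.ofReal (H₀ * Real.exp (-β * L)))
    (hE : E ⊆ B ∪ {ω | κ * L - r ≤ f ω}) :
    μ E ≤ ENNReal.ofReal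
      ((H₀ + max H 1 * Real.exp (α * (C + r))) * Real.exp (-min β (α * κ) * L)) := by
  have htail : μ {ω | κ * L - r ≤ f ω} ≤
      ENNReal.ofReal (max H 1 * Real.exp (α * (C + r)) * Real.exp (-(α * κ) * L)) := by
    refine (hf.measure_le hα _).trans_eq ?_
    rw [mul_assoc, ← Real.exp_add]
    ring_nf
  calc μ E ≤ μ B + μ {ω | κ * L - r ≤ f ω} := (measure_mono hE).trans (measure_union_le _ _)
    _ ≤ _ := (add_le_add hB htail).trans (ofReal_mul_exp_add_le hH₀ (by positivity) hL)

end Probability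

section SelectionErrors

variable {C H α K H₀ : ℝ}

lemma exists_measure_mem_ihat_le {A α₀ M : ℝ} (hα : 0 < α) (hA : 0 < A) (hAK : A < K)
    (hH₀ : 0 ≤ H₀) (hα₀ : 0 < α₀) (hM : 0 ≤ M) :
    ∃ R β : ℝ, 0 < R ∧ 0 < β ∧ ∀ {n : ℕ} {σ : ℝ} {μ : Measure (Fin n → ℝ)}
      [IsProbabilityMeasure μ] {θ : Fin n → ℝ} {S : Finset (Fin n)}
      {Itil : (Fin n → ℝ) → Finset (Fin n)} {i : Fin n}, 0 < σ →
      HasExpTail μ (fun x => ((x i - θ i) / σ) ^ 2) C H α → IsActiveSet (A * σ ^ 2) θ S →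
      (∀ m : ℝ, 0 ≤ m → μ {x | M * S.card + m ≤ ((Itil x).card : ℝ)} ≤
        ENNReal.ofReal (H₀ * Real.exp (-α₀ * ell n S.card - α₀ * m / 2))) →
      i ∉ S → μ {x | i ∈ ihat K σ Itil x} ≤
        ENNReal.ofReal (R * Real.exp (-β * logSparsity n S.card)) := by
  have hK : 0 < K := hA.trans hAK
  obtain ⟨ε, hε, hAε⟩ : ∃ ε : ℝ, 0 < ε ∧ A < K * (1 - ε) := by
    refine ⟨(K - A) / (2 * K), div_pos (sub_pos.mpr hAK) (by positivity), ?_⟩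
    field_simp
    linarith
  obtain ⟨κ, r, hκ, hnoise⟩ := exists_linear_le_noise_of_mem_ihat hA hK hε.le hAε hM
  refine ⟨H₀ + max H 1 * Real.exp (α * (C + r)), min (α₀ * ε / 2) (α * κ), by positivity,
    by positivity, fun {n σ μ _ θ S Itil i} hσ htail hS hover hiS => ?_⟩
  have hL := logSparsity_nonneg i.pos (card_finset_fin_le S)
  set L := logSparsity n S.card
  set m := (max S.card 1 : ℕ) * Real.exp (ε * L)
  have hm : ε * L ≤ m := by
    have hmax : (1 : ℝ) ≤ (max S.card 1 : ℕ) := by exact_mod_cast le_max_right _ _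
    have hexp := Real.add_one_le_exp (ε * L)
    exact (by linarith : ε * L ≤ Real.exp (ε * L)).trans
      (le_mul_of_one_le_left (Real.exp_pos _).le hmax)
  refine measure_le_of_subset_union_tail htail hα.le hH₀ hL
    (B := {x | M * S.card + m ≤ ((Itil x).card : ℝ)}) ?_ fun x hx => ?_
  · refine (hover m (by positivity)).trans (ENNReal.ofReal_le_ofReal ?_)
    have hell := mul_nonneg hα₀.le (ell_nonneg_s6 (card_finset_fin_le S))
    have hαm := mul_le_mul_of_nonneg_left hm hα₀.le
    gcongr
    linarith
  · exact (le_or_gt (M * S.card + m) ((Itil x).card : ℝ)).imp_right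
      fun hsize => hnoise hσ hS hiS hx hsize.le

lemma exists_measure_notMem_ihat_le {A α₁ δ : ℝ} (hα : 0 < α) (hK : 0 < K) (hKA : K < A)
    (hH₀ : 0 ≤ H₀) (hα₁ : 0 < α₁) (hδ : 0 < δ) :
    ∃ R β : ℝ, 0 < R ∧ 0 < β ∧ ∀ {n : ℕ} {σ : ℝ} {μ : Measure (Fin n → ℝ)}
      [IsProbabilityMeasure μ] {θ : Fin n → ℝ} {S : Finset (Fin n)}
      {Itil : (Fin n → ℝ) → Finset (Fin n)} {i : Fin n}, 0 < σ →
      HasExpTail μ (fun x => ((x i - θ i) / σ) ^ 2) C H α → IsActiveSet (A * σ ^ 2) θ S →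
      μ {x | ((Itil x).card : ℝ) ≤ δ * S.card} ≤
        ENNReal.ofReal (H₀ * Real.exp (-α₁ * ell n S.card)) →
      i ∈ S → μ {x | i ∉ ihat K σ Itil x} ≤
        ENNReal.ofReal (R * Real.exp (-β * logSparsity n S.card)) := by
  obtain ⟨κ, r, hκ, hnoise⟩ := exists_linear_le_noise_of_notMem_ihat hK hKA hδ
  refine ⟨H₀ + max H 1 * Real.exp (α * (C + r)), min α₁ (α * κ), by positivity,
    by positivity, fun {n σ μ _ θ S Itil i} hσ htail hS hunder hiS => ?_⟩
  have hSn := card_finset_fin_le S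
  have hell := logSparsity_le_ell (card_pos.mpr ⟨i, hiS⟩) hSn
  refine measure_le_of_subset_union_tail htail hα.le hH₀ (logSparsity_nonneg i.pos hSn)
    (B := {x | ((Itil x).card : ℝ) ≤ δ * S.card}) ?_ fun x hx => ?_
  · refine hunder.trans (ENNReal.ofReal_le_ofReal ?_)
    rw [neg_mul, neg_mul]
    gcongr
  · exact (le_or_gt ((Itil x).card : ℝ) (δ * S.card)).imp_right
      fun hsize => hnoise hσ hS hiS hx hsize.le

end SelectionErrors

lemma natCast_mul_ofReal_mul_exp_logSparsity (n s : ℕ) (R β : ℝ) :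
    n * ENNReal.ofReal (R * Real.exp (-β * logSparsity n s)) =
      ENNReal.ofReal (R * n * ((n : ℝ) / (max s 1 : ℕ)) ^ (-β)) := by
  rcases Nat.eq_zero_or_pos n with rfl | hn
  · simp
  · rw [Real.rpow_def_of_pos (by positivity), ← logSparsity, ← ENNReal.ofReal_natCast,
      ← ENNReal.ofReal_mul n.cast_nonneg]
    ring_nf

theorem stmt_6_general {C H α K A₀ A₁ H₀ α₀ α₁ M₁ δ : ℝ} (hα : 0 < α) (hA₀ : 0 < A₀)
    (hA₀K : A₀ < K) (hKA₁ : K < A₁) (hH₀ : 0 ≤ H₀) (hα₀ : 0 < α₀) (hα₁ : 0 < α₁)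
    (hM₁ : 0 ≤ M₁) (hδ : 0 < δ) :
    ∃ H₃ α₄ : ℝ, 0 < H₃ ∧ 0 < α₄ ∧ ∀ {n : ℕ} {σ : ℝ} {μ : Measure (Fin n → ℝ)}
      [IsProbabilityMeasure μ] {θ : Fin n → ℝ} {S : Finset (Fin n)}
      {Itil : (Fin n → ℝ) → Finset (Fin n)}, 0 < σ →
      (∀ i, HasExpTail μ (fun x => ((x i - θ i) / σ) ^ 2) C H α) →
      IsActiveSet (A₀ * σ ^ 2) θ S → IsActiveSet (A₁ * σ ^ 2) θ S →
      (∀ m : ℝ, 0 ≤ m → μ {x | M₁ * S.card + m ≤ ((Itil x).card : ℝ)} ≤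
        ENNReal.ofReal (H₀ * Real.exp (-α₀ * ell n S.card - α₀ * m / 2))) →
      μ {x | ((Itil x).card : ℝ) ≤ δ * S.card} ≤
        ENNReal.ofReal (H₀ * Real.exp (-α₁ * ell n S.card)) →
      ∫⁻ x, ENNReal.ofReal (((ihat K σ Itil x \ S).card : ℝ) +
          ((S \ ihat K σ Itil x).card : ℝ)) ∂μ ≤
        ENNReal.ofReal (H₃ * n * ((n : ℝ) / (max S.card 1 : ℕ)) ^ (-α₄)) := by
  obtain ⟨R, β, hR, hβ, hpos⟩ :=
    exists_measure_mem_ihat_le (C := C) (H := H) hα hA₀ hA₀K hH₀ hα₀ hM₁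
  obtain ⟨R', β', hR', hβ', hneg⟩ :=
    exists_measure_notMem_ihat_le (C := C) (H := H) hα (hA₀.trans hA₀K) hKA₁ hH₀ hα₁ hδ
  refine ⟨R + R', min β β', by positivity, by positivity,
    fun {n σ μ _ θ S Itil} hσ htail hS₀ hS₁ hover hunder => ?_⟩
  rw [← natCast_mul_ofReal_mul_exp_logSparsity]
  refine (lintegral_hamming_loss_le (fun i => hpos hσ (htail i) hS₀ hover)
    fun i => hneg hσ (htail i) hS₁ hunder).trans ?_
  rw [Fintype.card_fin]
  rcases Nat.eq_zero_or_pos n with rfl | hn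
  · simp
  · gcongr
    exact ofReal_mul_exp_add_le hR.le hR'.le (logSparsity_nonneg hn (card_finset_fin_le S))

theorem stmt_6 (Cξ Hξ αξ : ℝ) (hCξ : 0 < Cξ) (hHξ : 0 < Hξ) (hαξ : 0 < αξ)
    (K A₀ A₁ α₀ α₁' M₁ δ : ℝ)
    (hK : 0 < K) (hA₀ : 0 < A₀) (hA₁ : 0 < A₁) (hα₀ : 0 < α₀) (hα₁' : 0 < α₁')
    (hM₁ : 1 < M₁) (hδ : 0 < δ) (hδ1 : δ < 1) (hA01 : A₀ ≤ A₁)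
    (hKC : A₀ + Cξ < K / 2)
    (hA1big : K / 2 + αξ⁻¹ * ((Cξ * αξ + 2) / 2 + 1) < A₁ / 6) :
    ∃ H₃ α₄ : ℝ, 0 < H₃ ∧ 0 < α₄ ∧
      ∀ (n : ℕ) (σ : ℝ), 0 < σ →
        ∀ P : (Fin n → ℝ) → Measure (Fin n → ℝ),
          (∀ θ, IsProbabilityMeasure (P θ)) →
          (∀ (θ : Fin n → ℝ) (I : Finset (Fin n)) (M : ℝ), 0 ≤ M →
              P θ {x | Cξ * I.card + M ≤ ∑ i ∈ I, ((x i - θ i) / σ) ^ 2}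
                ≤ ENNReal.ofReal (Hξ * Real.exp (-αξ * M))) →
          ∀ Itil : (Fin n → ℝ) → Finset (Fin n),
            (∀ (x : Fin n → ℝ) (I : Finset (Fin n)),
                (∑ i ∈ (Itil x)ᶜ, x i ^ 2) + K * σ ^ 2 * ell n (Itil x).card
                  ≤ (∑ i ∈ Iᶜ, x i ^ 2) + K * σ ^ 2 * ell n I.card) →
            ∀ Istar : ℝ → (Fin n → ℝ) → Finset (Fin n),
              (∀ (A : ℝ) (θ : Fin n → ℝ), 0 < A → ∀ I : Finset (Fin n),
                  (∑ i ∈ (Istar A θ)ᶜ, θ i ^ 2) + A * σ ^ 2 * ell n (Istar A θ).card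
                    ≤ (∑ i ∈ Iᶜ, θ i ^ 2) + A * σ ^ 2 * ell n I.card) →
              (∀ (θ : Fin n → ℝ) (M : ℝ), 0 ≤ M →
                  P θ {x | M₁ * (Istar A₀ θ).card + M ≤ ((Itil x).card : ℝ)}
                    ≤ ENNReal.ofReal (Hξ / (1 - Real.exp (-1)) *
                        Real.exp (-α₀ * ell n (Istar A₀ θ).card - α₀ * M / 2))) →
              (∀ θ : Fin n → ℝ,
                  P θ {x | ((Itil x).card : ℝ) ≤ δ * (Istar A₁ θ).card}
                    ≤ ENNReal.ofReal (Hξ / (1 - Real.exp (-1)) *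
                        Real.exp (-α₁' * ell n (Istar A₁ θ).card))) →
              ∀ θ : Fin n → ℝ, Istar A₁ θ = Istar A₀ θ →
                (∫⁻ x, ENNReal.ofReal
                    (((ihat K σ Itil x \ Istar A₁ θ).card : ℝ) +
                      ((Istar A₁ θ \ ihat K σ Itil x).card : ℝ)) ∂(P θ))
                  ≤ ENNReal.ofReal
                      (H₃ * (n : ℝ) * ((n : ℝ) / (↑(max (Istar A₁ θ).card 1))) ^ (-α₄)) := by
  have hA₀K : A₀ < K := by linarith
  have hKA₁ : K < A₁ := by
    have : 0 < αξ⁻¹ * ((Cξ * αξ + 2) / 2 + 1) := by positivity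
    linarith
  have hH₀ : 0 ≤ Hξ / (1 - Real.exp (-1)) := div_nonneg hHξ.le (by simp)
  obtain ⟨H₃, α₄, hH₃, hα₄, hrisk⟩ :=
    stmt_6_general (C := Cξ) (H := Hξ) hαξ hA₀ hA₀K hKA₁ hH₀ hα₀ hα₁'
      (zero_le_one.trans hM₁.le) hδ
  refine ⟨H₃, α₄, hH₃, hα₄, fun n σ hσ P _ hnoise Itil _ Istar hIstar hover hunder θ hθ => ?_⟩
  exact hrisk hσ (fun i M hM => by simpa using hnoise θ {i} M hM) (hθ ▸ hIstar A₀ θ hA₀)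
    (hIstar A₁ θ hA₁) (hθ ▸ hover θ) (hunder θ)
end
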